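/- A signed graph Σ is quasibalanced (any two negative circles of Σ have at least two common vertices) if and only if Σ has at most one unbalanced block, and that block, if it exists, is itself quasibalanced. -/

import Mathlib

/-- The sign of a walk in a signed graph: the product of the signs of its edges. -/
def walkSign {V : Type*} (G : SimpleGraph V) (σ : Sym2 V → ℤˣ) {u v : V}
    (w : G.Walk u v) : ℤˣ :=
  (w.edges.map σ).prod

/-- A set of vertices induces an inseparable subgraph: the induced subgraph is connected
and remains connected after deleting any one of its vertices (no cutpoint). -/
def inseparableOn {V : Type*} (G : SimpleGraph V) (S : Set V) : Prop :=
  (G.induce S).Connected ∧ ∀ v ∈ S, (G.induce (S \ {v})).Connected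

/-- `S` is (the vertex set of) a block of `G`: a maximal inseparable subgraph. -/
def isBlock {V : Type*} (G : SimpleGraph V) (S : Set V) : Prop :=
  inseparableOn G S ∧ ∀ T : Set V, S ⊆ T → inseparableOn G T → T = S

/-- The signed graph restricted to `S` (e.g. a block) is balanced: every circle lying
within `S` is positive. -/
def balancedOn {V : Type*} (G : SimpleGraph V) (σ : Sym2 V → ℤˣ) (S : Set V) : Prop :=
  ∀ ⦃a : V⦄ (w : G.Walk a a), w.IsCycle → (∀ x ∈ w.support, x ∈ S) →
    walkSign G σ w = 1

/-- The signed graph restricted to `S` is quasibalanced: any two negative circles lying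
within `S` have at least two common vertices. -/
def quasibalancedOn {V : Type*} (G : SimpleGraph V) (σ : Sym2 V → ℤˣ) (S : Set V) :
    Prop :=
  ∀ ⦃a : V⦄ (w : G.Walk a a) ⦃b : V⦄ (w' : G.Walk b b),
    w.IsCycle → w'.IsCycle → (∀ x ∈ w.support, x ∈ S) → (∀ x ∈ w'.support, x ∈ S) →
    walkSign G σ w = -1 → walkSign G σ w' = -1 →
    ∃ x y : V, x ≠ y ∧ x ∈ w.support ∧ y ∈ w.support ∧ x ∈ w'.support ∧ y ∈ w'.support

/-!
Two inseparable vertex sets with two common vertices have an inseparable union: after the deletion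
of any vertex, a surviving common vertex joins the two connected remainders. Hence distinct blocks
share at most one vertex, so the unbalanced blocks of a quasibalanced signed graph coincide.
For the same reason the union of all inseparable sets containing a given inseparable set is again
inseparable, so it is a block; since a circle is inseparable, every circle lies in a block, even in
an infinite graph.
-/

section Inseparable

variable {V : Type*} {G : SimpleGraph V} {S T : Set V}

theorem inseparableOn.connected_diff_singleton (hS : inseparableOn G S) (v : V) :
    (G.induce (S \ {v})).Connected := by
  by_cases hv : v ∈ S
  · exact hS.2 v hv
  · rw [Set.sdiff_singleton_eq_self hv]
    exact hS.1

theorem inseparableOn.nontrivial (hS : inseparableOn G S) : S.Nontrivial := by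
  obtain ⟨x, hx⟩ := hS.1.nonempty
  obtain ⟨y, hy, hyx⟩ := (hS.2 x hx).nonempty
  exact ⟨x, hx, y, hy, Ne.symm hyx⟩

theorem inseparableOn_sUnion {𝒮 : Set (Set V)} (hne : 𝒮.Nonempty)
    (h𝒮 : ∀ S ∈ 𝒮, inseparableOn G S) (hinter : 𝒮.Pairwise fun S T ↦ (S ∩ T).Nontrivial) :
    inseparableOn G (⋃₀ 𝒮) := by
  have hinter' : ∀ S ∈ 𝒮, ∀ T ∈ 𝒮, (S ∩ T).Nontrivial := by
    intro S hS T hT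
    by_cases hST : S = T
    · simpa [hST] using (h𝒮 T hT).nontrivial
    · exact hinter hS hT hST
  refine ⟨G.induce_sUnion_connected_of_pairwise_not_disjoint hne
    (fun hS hT ↦ (hinter' _ hS _ hT).nonempty) (fun hS ↦ (h𝒮 _ hS).1), fun v _ ↦ ?_⟩
  have hdiff : ⋃₀ 𝒮 \ {v} = ⋃₀ ((· \ {v}) '' 𝒮) := by
    rw [Set.sUnion_image, Set.sUnion_eq_biUnion]
    simp only [Set.iUnion_sdiff]
  rw [hdiff]
  apply G.induce_sUnion_connected_of_pairwise_not_disjoint (hne.image _)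
  · rintro _ _ ⟨S, hS, rfl⟩ ⟨T, hT, rfl⟩
    obtain ⟨x, ⟨hxS, hxT⟩, hxv⟩ := (hinter' S hS T hT).exists_ne v
    exact ⟨x, ⟨hxS, hxv⟩, hxT, hxv⟩
  · rintro _ ⟨S, hS, rfl⟩
    exact (h𝒮 S hS).connected_diff_singleton v

theorem inseparableOn.union (hS : inseparableOn G S) (hT : inseparableOn G T)
    (hST : (S ∩ T).Nontrivial) : inseparableOn G (S ∪ T) := by
  rw [← Set.sUnion_pair]
  refine inseparableOn_sUnion (Set.insert_nonempty S {T}) (by simp [hS, hT]) ?_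
  exact Set.pairwise_pair.2 fun _ ↦ ⟨hST, Set.inter_comm S T ▸ hST⟩

theorem isBlock.eq_of_nontrivial_inter (hS : isBlock G S) (hT : isBlock G T)
    (hST : (S ∩ T).Nontrivial) : S = T := by
  have hunion : inseparableOn G (S ∪ T) := hS.1.union hT.1 hST
  calc
    S = S ∪ T := (hS.2 _ Set.subset_union_left hunion).symm
    _ = T := hT.2 _ Set.subset_union_right hunion

theorem inseparableOn.exists_isBlock_superset (hS : inseparableOn G S) :
    ∃ B, isBlock G B ∧ S ⊆ B := by
  let 𝒮 : Set (Set V) := {T | S ⊆ T ∧ inseparableOn G T}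
  have hS_mem : S ∈ 𝒮 := ⟨Set.Subset.rfl, hS⟩
  have hunion : inseparableOn G (⋃₀ 𝒮) :=
    inseparableOn_sUnion ⟨S, hS_mem⟩ (fun _ hT ↦ hT.2)
      fun _ hT _ hT' _ ↦ hS.nontrivial.mono (Set.subset_inter hT.1 hT'.1)
  have hS_subset : S ⊆ ⋃₀ 𝒮 := Set.subset_sUnion_of_mem hS_mem
  refine ⟨⋃₀ 𝒮, ⟨hunion, fun T hT hTins ↦ ?_⟩, hS_subset⟩
  exact (Set.subset_sUnion_of_mem (show T ∈ 𝒮 from ⟨hS_subset.trans hT, hTins⟩)).antisymm hT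

end Inseparable

section Cycle

variable {V : Type*} {G : SimpleGraph V}

theorem setOf_mem_support_dropLast_of_isPath {u v : V} {p : G.Walk u v} (hp : p.IsPath)
    (hnil : ¬ p.Nil) : {x | x ∈ p.dropLast.support} = {x | x ∈ p.support} \ {v} := by
  have hsupport : p.support = p.dropLast.support ++ [v] := by
    rw [p.support_dropLast hnil, p.dropLast_support_concat]
  have hv : v ∉ p.dropLast.support := by
    have hnodup := hp.support_nodup
    rw [hsupport, List.nodup_append] at hnodup
    exact fun hmem ↦ hnodup.2.2 v hmem v (List.mem_singleton_self v) rfl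
  ext x
  by_cases hx : x = v
  · simp [hx, hv]
  · simp [hsupport, hx]

theorem mem_support_tail_of_not_nil {a x : V} {w : G.Walk a a} (hnil : ¬ w.Nil) :
    x ∈ w.tail.support ↔ x ∈ w.support := by
  rw [← w.cons_support_tail hnil, List.mem_cons, or_iff_right_of_imp]
  rintro rfl
  exact w.tail.end_mem_support

theorem inseparableOn_setOf_mem_support {a : V} {w : G.Walk a a} (hw : w.IsCycle) :
    inseparableOn G {x | x ∈ w.support} := by
  classical
  refine ⟨w.connected_induce_support, fun v hv ↦ ?_⟩
  have hrot : (w.rotate v hv).IsCycle := hw.rotate hv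
  let p := (w.rotate v hv).tail
  have hp_nil : ¬ p.Nil := by
    have := hrot.three_le_length
    have := SimpleGraph.Walk.length_tail_add_one hrot.not_nil
    rw [← SimpleGraph.Walk.length_eq_zero_iff]
    lia
  have hp_support : {x | x ∈ p.support} = {x | x ∈ w.support} := by
    ext x
    exact (mem_support_tail_of_not_nil hrot.not_nil).trans (w.mem_support_rotate_iff v hv)
  rw [← hp_support, ← setOf_mem_support_dropLast_of_isPath hrot.isPath_tail hp_nil]
  exact p.dropLast.connected_induce_support

theorem exists_isBlock_of_isCycle {a : V} {w : G.Walk a a} (hw : w.IsCycle) :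
    ∃ B, isBlock G B ∧ ∀ x ∈ w.support, x ∈ B :=
  (inseparableOn_setOf_mem_support hw).exists_isBlock_superset

end Cycle

section Balance

variable {V : Type*} {G : SimpleGraph V} {σ : Sym2 V → ℤˣ} {S T : Set V}

theorem not_balancedOn_iff_exists_isCycle :
    ¬ balancedOn G σ S ↔ ∃ (a : V) (w : G.Walk a a), w.IsCycle ∧ (∀ x ∈ w.support, x ∈ S) ∧
      walkSign G σ w = -1 := by
  simp only [balancedOn, not_forall, exists_prop, ← ne_eq, Int.units_ne_iff_eq_neg]

theorem quasibalancedOn.mono (hT : quasibalancedOn G σ T) (hST : S ⊆ T) :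
    quasibalancedOn G σ S :=
  fun _ w _ w' hw hw' hwS hwS' ↦
    hT w w' hw hw' (fun x hx ↦ hST (hwS x hx)) fun x hx ↦ hST (hwS' x hx)

theorem quasibalancedOn.nontrivial_inter (hST : quasibalancedOn G σ (S ∪ T))
    (hS : ¬ balancedOn G σ S) (hT : ¬ balancedOn G σ T) : (S ∩ T).Nontrivial := by
  obtain ⟨a, w, hw, hwS, hneg⟩ := not_balancedOn_iff_exists_isCycle.1 hS
  obtain ⟨b, w', hw', hwT, hneg'⟩ := not_balancedOn_iff_exists_isCycle.1 hT
  obtain ⟨x, y, hxy, hx, hy, hx', hy'⟩ := hST w w' hw hw' (fun z hz ↦ .inl (hwS z hz))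
    (fun z hz ↦ .inr (hwT z hz)) hneg hneg'
  exact ⟨x, ⟨hwS x hx, hwT x hx'⟩, y, ⟨hwS y hy, hwT y hy'⟩, hxy⟩

end Balance

theorem quasibalanced_iff_blocks_general {V : Type*}
    (G : SimpleGraph V) (σ : Sym2 V → ℤˣ) :
    quasibalancedOn G σ Set.univ ↔
      ((∀ S T : Set V, isBlock G S → isBlock G T →
          ¬ balancedOn G σ S → ¬ balancedOn G σ T → S = T) ∧
        ∀ S : Set V, isBlock G S → ¬ balancedOn G σ S → quasibalancedOn G σ S) := by
  constructor
  · intro h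
    exact ⟨fun S T hS hT hSunbal hTunbal ↦ hS.eq_of_nontrivial_inter hT
      ((h.mono (Set.subset_univ _)).nontrivial_inter hSunbal hTunbal),
      fun S _ _ ↦ h.mono (Set.subset_univ S)⟩
  · rintro ⟨hunique, hblock⟩ a w b w' hw hw' - - hneg hneg'
    obtain ⟨S, hS, hwS⟩ := exists_isBlock_of_isCycle hw
    obtain ⟨T, hT, hwT⟩ := exists_isBlock_of_isCycle hw'
    have hSunbal : ¬ balancedOn G σ S :=
      not_balancedOn_iff_exists_isCycle.2 ⟨a, w, hw, hwS, hneg⟩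
    have hTunbal : ¬ balancedOn G σ T :=
      not_balancedOn_iff_exists_isCycle.2 ⟨b, w', hw', hwT, hneg'⟩
    obtain rfl : S = T := hunique S T hS hT hSunbal hTunbal
    exact hblock S hS hSunbal w w' hw hw' hwS hwT hneg hneg'

/-- A signed graph is quasibalanced (any two negative circles share at least two
vertices) iff it has at most one unbalanced block and that block, if it exists, is
itself quasibalanced. -/
theorem quasibalanced_iff_blocks {V : Type*} [Fintype V]
    (G : SimpleGraph V) (σ : Sym2 V → ℤˣ) :
    quasibalancedOn G σ Set.univ ↔
      ((∀ S T : Set V, isBlock G S → isBlock G T →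
          ¬ balancedOn G σ S → ¬ balancedOn G σ T → S = T) ∧
        ∀ S : Set V, isBlock G S → ¬ balancedOn G σ S → quasibalancedOn G σ S) :=
  quasibalanced_iff_blocks_general G σ
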